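/- arXiv:2509.21479 — 6 statements merged into one kernel-verified Lean document; each statement's English description precedes it below -/
import Mathlib

section
/- Let Â, A : Fin K → ℝ, λ ∈ ℝ, ρ ∈ ℕ, and define the nonconformity score S(Â, A) = sInf {s ∈ ℝ : L_λ(𝒮(Â, s), A) ≤ ρ}. Then: (i) for every threshold s with s > S(Â, A), the filtered set satisfies L_λ(𝒮(Â, s), A) ≤ ρ, i.e., filtering at any threshold strictly above the nonconformity score retains at most ρ generations whose gold-standard score is below λ; and (ii) if moreover ρ < |{k : A k < λ}| (so the admissible set of thresholds is bounded below), then L_λ(𝒮(Â, s), A) ≤ ρ implies s ≥ S(Â, A). -/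
/-- The filtered set `𝒮(Â, s) = {k : Â k ≥ s}` as a `Finset`. -/
noncomputable def filteredSet {K : ℕ} (Ahat : Fin K → ℝ) (s : ℝ) : Finset (Fin K) :=
  Finset.univ.filter (fun k => Ahat k ≥ s)

/-- The counting loss `L_λ(T, A) = |{k ∈ T : A k < λ}|`. -/
noncomputable def countLoss {K : ℕ} (lam : ℝ) (T : Finset (Fin K)) (A : Fin K → ℝ) : ℕ :=
  (T.filter (fun k => A k < lam)).card

/-- The nonconformity score `S(Â, A) = sInf {s : L_λ(𝒮(Â, s), A) ≤ ρ}`. -/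
noncomputable def nonconfScore {K : ℕ} (lam : ℝ) (ρ : ℕ) (Ahat A : Fin K → ℝ) : ℝ :=
  sInf {s : ℝ | countLoss lam (filteredSet Ahat s) A ≤ ρ}

/-!
Only the low-quality indices matter: the loss at threshold `s` is the number of `k` with `A k < λ`
and `s ≤ Â k`, which is antitone in `s`. Hence the admissible thresholds form an upper set, and a
threshold above the infimum lies above some admissible one. When `ρ` is smaller than the number of
low-quality indices, an admissible threshold must discard at least one of them, so it exceeds the
smallest of their surrogate scores, and the infimum is a genuine lower bound.
-/

theorem le_of_antitone_of_csInf_lt {α β : Type*} [ConditionallyCompleteLinearOrder α] [Preorder β]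
    {L : α → β} (hL : Antitone L) {b : β} {s : α} (hne : {t | L t ≤ b}.Nonempty)
    (hs : sInf {t | L t ≤ b} < s) : L s ≤ b := by
  obtain ⟨t, ht, hts⟩ := exists_lt_of_csInf_lt hne hs
  exact (hL hts.le).trans ht

/-- The number of elements of `B` whose score under `f` is at least the threshold `s`. With `B` the
set of low-quality indices, this is the counting loss of the filtered set. -/
def exceedanceCount {ι α : Type*} [LE α] [DecidableLE α] (f : ι → α) (B : Finset ι) (s : α) : ℕ :=
  (B.filter (fun k => s ≤ f k)).card

section ExceedanceCount

variable {ι α : Type*} (f : ι → α) (B : Finset ι)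

theorem antitone_exceedanceCount [Preorder α] [DecidableLE α] :
    Antitone (exceedanceCount f B) := fun _ _ hst =>
  Finset.card_le_card (Finset.monotone_filter_right B fun _ _ htk => hst.trans htk)

theorem exists_exceedanceCount_eq_zero [LinearOrder α] [NoMaxOrder α] [Nonempty α] :
    ∃ s, exceedanceCount f B s = 0 := by
  obtain ⟨M, hM⟩ := (B.image f).bddAbove
  obtain ⟨s, hMs⟩ := exists_gt M
  refine ⟨s, Finset.card_eq_zero.mpr (Finset.filter_false_of_mem fun k hk => ?_)⟩
  exact ((hM (Finset.mem_image_of_mem f hk)).trans_lt hMs).not_ge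

variable {f B}

theorem exists_lt_of_exceedanceCount_lt_card [LinearOrder α] {s : α}
    (h : exceedanceCount f B s < B.card) : ∃ k ∈ B, f k < s := by
  obtain ⟨k, hkB, hk⟩ := Finset.exists_mem_notMem_of_card_lt_card h
  exact ⟨k, hkB, not_le.mp fun hsk => hk (Finset.mem_filter.mpr ⟨hkB, hsk⟩)⟩

theorem bddBelow_setOf_exceedanceCount_le [LinearOrder α] {ρ : ℕ} (hρ : ρ < B.card) :
    BddBelow {s | exceedanceCount f B s ≤ ρ} := by
  obtain ⟨k₀, -⟩ := Finset.card_pos.mp (Nat.zero_lt_of_lt hρ)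
  have : Nonempty α := ⟨f k₀⟩
  obtain ⟨m, hm⟩ := (B.image f).bddBelow
  refine ⟨m, fun s hs => ?_⟩
  obtain ⟨k, hkB, hks⟩ := exists_lt_of_exceedanceCount_lt_card (lt_of_le_of_lt hs hρ)
  exact (hm (Finset.mem_image_of_mem f hkB)).trans hks.le

theorem stmt_3_general [ConditionallyCompleteLinearOrder α] [NoMaxOrder α]
    (f : ι → α) (B : Finset ι) (ρ : ℕ) :
    (∀ s, sInf {t | exceedanceCount f B t ≤ ρ} < s → exceedanceCount f B s ≤ ρ) ∧
    (ρ < B.card →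
      ∀ s, exceedanceCount f B s ≤ ρ → sInf {t | exceedanceCount f B t ≤ ρ} ≤ s) := by
  refine ⟨fun s hs => ?_, fun hρ s hs => csInf_le (bddBelow_setOf_exceedanceCount_le hρ) hs⟩
  have : Nonempty α := ⟨s⟩
  obtain ⟨t, ht⟩ := exists_exceedanceCount_eq_zero f B
  exact le_of_antitone_of_csInf_lt (antitone_exceedanceCount f B) ⟨t, ht.trans_le ρ.zero_le⟩ hs

end ExceedanceCount

theorem countLoss_filteredSet {K : ℕ} (lam : ℝ) (Ahat A : Fin K → ℝ) (s : ℝ) :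
    countLoss lam (filteredSet Ahat s) A =
      exceedanceCount Ahat (Finset.univ.filter (fun k => A k < lam)) s :=
  congrArg Finset.card (Finset.filter_comm _ _ _)

theorem stmt_3 {K : ℕ} (Ahat A : Fin K → ℝ) (lam : ℝ) (ρ : ℕ) :
    (∀ s : ℝ, nonconfScore lam ρ Ahat A < s →
      countLoss lam (filteredSet Ahat s) A ≤ ρ) ∧
    (ρ < (Finset.univ.filter (fun k => A k < lam)).card →
      ∀ s : ℝ, countLoss lam (filteredSet Ahat s) A ≤ ρ →
        nonconfScore lam ρ Ahat A ≤ s) := by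
  simp only [nonconfScore, countLoss_filteredSet]
  exact stmt_3_general Ahat (Finset.univ.filter (fun k => A k < lam)) ρ
end

section
/- Coverage transfer for conformal filtering: let (Ω, P) be a probability space, let Â, A : Ω → (Fin K → ℝ) be random score vectors, and ŝ : Ω → ℝ a random threshold; fix λ ∈ ℝ, ρ ∈ ℕ, α ∈ (0,1). If P(S(Â, A) < ŝ) ≥ 1 − α, then P(L_λ(𝒮(Â, ŝ), A) ≤ ρ) ≥ 1 − α; that is, whenever the conformal cutoff strictly exceeds the nonconformity score with probability at least 1 − α, the filtered set contains at most ρ low-quality generations with probability at least 1 − α. -/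
/-!
Raising the threshold shrinks the filtered set and hence the loss, so the admissible thresholds
`{s | L_λ(𝒮(Â, s), A) ≤ ρ}` form an upper set, nonempty because a threshold above all scores keeps
nothing. If `ŝ` strictly exceeds their infimum `S(Â, A)`, it lies above an admissible one and is
itself admissible; the strictness matters because the infimum need not be attained. If every
threshold is admissible, then `S(Â, A) = 0` by the convention for `sInf`, and the argument still
applies.
-/

section Pointwise

variable {K : ℕ}

theorem antitone_filteredSet (Ahat : Fin K → ℝ) : Antitone (filteredSet Ahat) :=
  fun _ _ hst => Finset.monotone_filter_right _ fun _ _ hk => hst.trans hk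

theorem filteredSet_eq_empty_iff {Ahat : Fin K → ℝ} {s : ℝ} :
    filteredSet Ahat s = ∅ ↔ ∀ k, Ahat k < s := by
  simp [filteredSet]

theorem monotone_countLoss (lam : ℝ) (A : Fin K → ℝ) : Monotone fun T => countLoss lam T A :=
  fun _ _ hTU => Finset.card_le_card (Finset.filter_subset_filter _ hTU)

theorem antitone_countLoss_filteredSet (lam : ℝ) (Ahat A : Fin K → ℝ) :
    Antitone fun s => countLoss lam (filteredSet Ahat s) A :=
  (monotone_countLoss lam A).comp_antitone (antitone_filteredSet Ahat)

theorem exists_countLoss_filteredSet_eq_zero (lam : ℝ) (Ahat A : Fin K → ℝ) :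
    ∃ s, countLoss lam (filteredSet Ahat s) A = 0 := by
  obtain ⟨s, hs⟩ : ∃ s, ∀ k, Ahat k < s :=
    (Filter.eventually_all.2 fun k => Filter.eventually_gt_atTop (Ahat k)).exists
  exact ⟨s, by simp [filteredSet_eq_empty_iff.2 hs, countLoss]⟩

theorem countLoss_filteredSet_le_of_nonconfScore_lt {lam : ℝ} {ρ : ℕ} {Ahat A : Fin K → ℝ}
    {t : ℝ} (ht : nonconfScore lam ρ Ahat A < t) :
    countLoss lam (filteredSet Ahat t) A ≤ ρ := by
  have hne : {s | countLoss lam (filteredSet Ahat s) A ≤ ρ}.Nonempty :=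
    (exists_countLoss_filteredSet_eq_zero lam Ahat A).imp fun _ hs => hs.trans_le ρ.zero_le
  obtain ⟨s, hs, hst⟩ := exists_lt_of_csInf_lt hne ht
  exact (antitone_countLoss_filteredSet lam Ahat A hst.le).trans hs

end Pointwise

open MeasureTheory in
theorem stmt_7_general {K : ℕ} {Ω : Type*} [MeasurableSpace Ω] (P : Measure Ω)
    (Ahat A : Ω → Fin K → ℝ) (shat : Ω → ℝ) (lam : ℝ) (ρ : ℕ) :
    P {ω | nonconfScore lam ρ (Ahat ω) (A ω) < shat ω} ≤
      P {ω | countLoss lam (filteredSet (Ahat ω) (shat ω)) (A ω) ≤ ρ} :=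
  measure_mono fun _ => countLoss_filteredSet_le_of_nonconfScore_lt

open MeasureTheory in
theorem stmt_7 {K : ℕ} {Ω : Type*} [MeasurableSpace Ω]
    (P : Measure Ω) [IsProbabilityMeasure P]
    (Ahat A : Ω → Fin K → ℝ) (shat : Ω → ℝ)
    (hAhat : Measurable Ahat) (hA : Measurable A) (hshat : Measurable shat)
    (lam : ℝ) (ρ : ℕ) (α : ℝ) (hα : α ∈ Set.Ioo (0 : ℝ) 1)
    (hcov : ENNReal.ofReal (1 - α) ≤
      P {ω | nonconfScore lam ρ (Ahat ω) (A ω) < shat ω}) :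
    ENNReal.ofReal (1 - α) ≤
      P {ω | countLoss lam (filteredSet (Ahat ω) (shat ω)) (A ω) ≤ ρ} :=
  hcov.trans (stmt_7_general P Ahat A shat lam ρ)
end

section
/- Kernel Bayes formula: let E be a standard Borel space, μ and ν probability measures on E, W : E × E → ℝ≥0 jointly measurable with ∫ W(x, x') dμ(x') = 1 for all x, κ the Markov kernel κ(x) = μ.withDensity(W(x, ·)), and P = ν ⊗ κ the law of (X, X'). Then for every bounded measurable h : E → ℝ, the function G(x') = (∫ h(x) · W(x, x') dν(x)) / (∫ W(x, x') dν(x)) (defined to be 0 where the denominator vanishes) gives a version of the conditional expectation: G ∘ snd is P-almost-everywhere equal to the conditional expectation of h ∘ fst given the σ-algebra generated by the second coordinate. -/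
open MeasureTheory ProbabilityTheory
open scoped NNReal ENNReal

/-! The joint law has density `W` with respect to `ν.prod μ`, so it can be disintegrated along
either coordinate: along the second one, the fiber over `x'` is the unnormalized posterior
`ν.withDensity (W · x')`. Conditioning on the base point of a disintegration into finite measures
means averaging over the fiber; the average over the unnormalized posterior is the Bayes quotient.
Total masses `0` and `∞`, for which that quotient is a junk value, cause no trouble: on a null fiber
both the average and the integral vanish, and almost every fiber has finite mass. -/

section Disintegration

variable {α β F : Type*} [MeasurableSpace α] [MeasurableSpace β]
  [NormedAddCommGroup F] [NormedSpace ℝ F]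
  {μ : Measure α} [SFinite μ] {η : Kernel α β} [IsSFiniteKernel η] {f : α × β → F}

theorem ae_isFiniteMeasure_of_isFiniteMeasure_compProd [IsFiniteMeasure (μ ⊗ₘ η)] :
    ∀ᵐ a ∂μ, IsFiniteMeasure (η a) := by
  have lintegral_mass : ∫⁻ a, η a Set.univ ∂μ ≠ ∞ := by
    simpa only [Measure.compProd_apply MeasurableSet.univ, Set.preimage_univ]
      using measure_ne_top (μ ⊗ₘ η) Set.univ
  filter_upwards [ae_lt_top (η.measurable_coe MeasurableSet.univ) lintegral_mass]
    with a ha using ⟨ha⟩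

theorem quasiMeasurePreserving_fst_compProd :
    Measure.QuasiMeasurePreserving Prod.fst (μ ⊗ₘ η) μ := by
  refine ⟨measurable_fst, Measure.AbsolutelyContinuous.mk fun s hs hμs => ?_⟩
  rw [Measure.map_apply measurable_fst hs, ← Set.prod_univ,
    Measure.compProd_apply_prod hs MeasurableSet.univ, setLIntegral_measure_zero s _ hμs]

theorem setIntegral_fst_preimage_compProd {s : Set α} (hs : MeasurableSet s)
    (hf : Integrable f (μ ⊗ₘ η)) :
    ∫ p in Prod.fst ⁻¹' s, f p ∂(μ ⊗ₘ η) = ∫ a in s, ∫ b, f (a, b) ∂η a ∂μ := by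
  rw [← Set.prod_univ, Measure.setIntegral_compProd hs MeasurableSet.univ hf.integrableOn]
  simp only [Measure.restrict_univ]

theorem integrable_integral_kernel (hf : Integrable f (μ ⊗ₘ η)) :
    Integrable (fun a => ∫ b, f (a, b) ∂η a) μ :=
  hf.integral_compProd

theorem aestronglyMeasurable_average_kernel (hf : Integrable f (μ ⊗ₘ η)) :
    AEStronglyMeasurable (fun a => ⨍ b, f (a, b) ∂η a) μ := by
  have mass_inv : Measurable fun a => ((η a).real Set.univ)⁻¹ :=
    (η.measurable_coe MeasurableSet.univ).ennreal_toReal.inv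
  simp only [average_eq]
  exact mass_inv.aestronglyMeasurable.smul (integrable_integral_kernel hf).aestronglyMeasurable

theorem integrable_average_kernel_fst [IsFiniteMeasure (μ ⊗ₘ η)] (hf : Integrable f (μ ⊗ₘ η)) :
    Integrable (fun p : α × β => ⨍ b, f (p.1, b) ∂η p.1) (μ ⊗ₘ η) := by
  have average_meas : AEStronglyMeasurable (fun p : α × β => ⨍ b, f (p.1, b) ∂η p.1) (μ ⊗ₘ η) :=
    (aestronglyMeasurable_average_kernel hf).comp_quasiMeasurePreserving
      quasiMeasurePreserving_fst_compProd
  have fiber_finite : ∀ᵐ a ∂μ, IsFiniteMeasure (η a) :=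
    ae_isFiniteMeasure_of_isFiniteMeasure_compProd
  refine (Measure.integrable_compProd_iff average_meas).2 ⟨?_, ?_⟩
  · filter_upwards [fiber_finite] with a _ using integrable_const _
  · refine (integrable_integral_kernel hf).norm.congr ?_
    filter_upwards [fiber_finite] with a _
    rw [integral_const, smul_eq_mul, ← norm_smul_of_nonneg measureReal_nonneg,
      measure_smul_average]

theorem setIntegral_average_kernel_fst [CompleteSpace F] [IsFiniteMeasure (μ ⊗ₘ η)]
    (hf : Integrable f (μ ⊗ₘ η)) {s : Set α} (hs : MeasurableSet s) :
    ∫ p in Prod.fst ⁻¹' s, ⨍ b, f (p.1, b) ∂η p.1 ∂(μ ⊗ₘ η)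
      = ∫ p in Prod.fst ⁻¹' s, f p ∂(μ ⊗ₘ η) := by
  rw [setIntegral_fst_preimage_compProd hs (integrable_average_kernel_fst hf),
    setIntegral_fst_preimage_compProd hs hf]
  refine integral_congr_ae (ae_restrict_of_ae ?_)
  filter_upwards [ae_isFiniteMeasure_of_isFiniteMeasure_compProd (μ := μ) (η := η)] with a _
  rw [integral_const, measure_smul_average]

theorem average_kernel_ae_eq_condExp [CompleteSpace F] {Ω : Type*} [MeasurableSpace Ω]
    {P : Measure Ω} [IsFiniteMeasure P] {X : Ω → α} {Y : Ω → β}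
    (hX : Measurable X) (hY : Measurable Y)
    (hXY : P.map (fun ω => (X ω, Y ω)) = μ ⊗ₘ η) (hf : Integrable f (μ ⊗ₘ η)) :
    (fun ω => ⨍ b, f (X ω, b) ∂η (X ω))
      =ᵐ[P] P[fun ω => f (X ω, Y ω) | MeasurableSpace.comap X inferInstance] := by
  have hpair : MeasurePreserving (fun ω => (X ω, Y ω)) P (μ ⊗ₘ η) := ⟨hX.prodMk hY, hXY⟩
  have : IsFiniteMeasure (μ ⊗ₘ η) := hXY ▸ inferInstance
  have average_integrable := integrable_average_kernel_fst hf
  refine ae_eq_condExp_of_forall_setIntegral_eq hX.comap_le (hpair.integrable_comp_of_integrable hf)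
    (fun _ _ _ => (hpair.integrable_comp_of_integrable average_integrable).integrableOn) ?_ ?_
  · rintro _ ⟨s, hs, rfl⟩ -
    have setIntegral_pair {g : α × β → F} (hg : Integrable g (μ ⊗ₘ η)) :
        ∫ ω in X ⁻¹' s, g (X ω, Y ω) ∂P = ∫ p in Prod.fst ⁻¹' s, g p ∂(μ ⊗ₘ η) := by
      rw [← hXY] at hg ⊢
      exact (setIntegral_map (measurable_fst hs) hg.aestronglyMeasurable
        hpair.measurable.aemeasurable).symm
    exact (setIntegral_pair average_integrable).trans <|
      (setIntegral_average_kernel_fst hf hs).trans (setIntegral_pair hf).symm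
  · have hXμ : P.map X ≪ μ :=
      (quasiMeasurePreserving_fst_compProd.comp hpair.quasiMeasurePreserving).absolutelyContinuous
    exact ((aestronglyMeasurable_average_kernel hf).mono_ac hXμ).comp_ae_measurable' hX.aemeasurable

end Disintegration

section Density

variable {α β F : Type*} [MeasurableSpace α] [MeasurableSpace β]
  [NormedAddCommGroup F] [NormedSpace ℝ F]

theorem average_withDensity (ρ : Measure α) {w : α → ℝ≥0} (hw : Measurable w) (g : α → F) :
    ⨍ x, g x ∂ρ.withDensity (fun x => (w x : ℝ≥0∞))
      = (∫ x, (w x : ℝ) ∂ρ)⁻¹ • ∫ x, w x • g x ∂ρ := by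
  have mass : (ρ.withDensity fun x => (w x : ℝ≥0∞)).real Set.univ = ∫ x, (w x : ℝ) ∂ρ := by
    rw [measureReal_def, withDensity_apply _ MeasurableSet.univ, Measure.restrict_univ,
      integral_eq_lintegral_of_nonneg_ae (.of_forall fun x => (w x).coe_nonneg)
        hw.coe_nnreal_real.aestronglyMeasurable]
    simp only [ENNReal.ofReal_coe_nnreal]
  rw [average_eq, mass, integral_withDensity_eq_integral_smul hw]

theorem map_withDensity_comp (ρ : Measure α) {g : α → β} (hg : Measurable g) {w : β → ℝ≥0∞}
    (hw : Measurable w) : (ρ.withDensity (w ∘ g)).map g = (ρ.map g).withDensity w := by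
  ext s hs
  rw [Measure.map_apply hg hs, withDensity_apply _ (hg hs), withDensity_apply _ hs,
    setLIntegral_map hs hw hg]
  rfl

theorem compProd_withDensity_const (ν : Measure α) (μ : Measure β) [SFinite ν] [SFinite μ]
    {W : α → β → ℝ≥0} (hW : Measurable (Function.uncurry W)) :
    ν ⊗ₘ (Kernel.const α μ).withDensity (fun x y => (W x y : ℝ≥0∞))
      = (ν.prod μ).withDensity (fun p => (W p.1 p.2 : ℝ≥0∞)) := by
  rw [Measure.compProd_withDensity hW.coe_nnreal_ennreal, Measure.compProd_const]

theorem map_swap_compProd_withDensity_const (ν : Measure α) (μ : Measure β) [SFinite ν] [SFinite μ]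
    {W : α → β → ℝ≥0} (hW : Measurable (Function.uncurry W)) :
    (ν ⊗ₘ (Kernel.const α μ).withDensity (fun x y => (W x y : ℝ≥0∞))).map Prod.swap
      = μ ⊗ₘ (Kernel.const β ν).withDensity (fun y x => (W x y : ℝ≥0∞)) := by
  have hW_swap : Measurable (Function.uncurry fun y x => W x y) := hW.comp measurable_swap
  have map_density := map_withDensity_comp (ν.prod μ) measurable_swap
    (w := fun q => (W q.2 q.1 : ℝ≥0∞)) hW_swap.coe_nnreal_ennreal
  rw [Measure.prod_swap] at map_density
  rw [compProd_withDensity_const ν μ hW, compProd_withDensity_const μ ν hW_swap, ← map_density]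
  rfl

end Density

theorem stmt_9_general {α β F : Type*} [MeasurableSpace α] [MeasurableSpace β]
    [NormedAddCommGroup F] [NormedSpace ℝ F] [CompleteSpace F]
    (μ : Measure β) (ν : Measure α) [SFinite μ] [IsFiniteMeasure ν]
    {W : α → β → ℝ≥0} (hW : Measurable (Function.uncurry W))
    (κ : Kernel α β) [IsFiniteKernel κ]
    (hκ : ∀ᵐ x ∂ν, κ x = μ.withDensity (fun x' => (W x x' : ℝ≥0∞)))
    {f : α × β → F} (hf : Integrable f (ν ⊗ₘ κ)) :
    (fun p : α × β => (∫ x, (W x p.2 : ℝ) ∂ν)⁻¹ • ∫ x, W x p.2 • f (x, p.2) ∂ν)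
      =ᵐ[ν ⊗ₘ κ] (ν ⊗ₘ κ)[f | MeasurableSpace.comap (Prod.snd : α × β → β) inferInstance] := by
  let unnormalizedPosterior : Kernel β α :=
    (Kernel.const β ν).withDensity fun x' x => (W x x' : ℝ≥0∞)
  have joint : ν ⊗ₘ κ = ν ⊗ₘ (Kernel.const α μ).withDensity fun x x' => (W x x' : ℝ≥0∞) := by
    refine Measure.compProd_congr ?_
    filter_upwards [hκ] with x hx
    rw [hx, Kernel.withDensity_apply _ hW.coe_nnreal_ennreal, Kernel.const_apply]
  have disintegration : (ν ⊗ₘ κ).map Prod.swap = μ ⊗ₘ unnormalizedPosterior := by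
    rw [joint, map_swap_compProd_withDensity_const ν μ hW]
  have swap_integrable : Integrable (f ∘ Prod.swap) (μ ⊗ₘ unnormalizedPosterior) := by
    rw [← disintegration]
    exact (integrable_map_equiv MeasurableEquiv.prodComm _).2 hf
  have average_posterior (p : α × β) : ⨍ x, f (x, p.2) ∂unnormalizedPosterior p.2
      = (∫ x, (W x p.2 : ℝ) ∂ν)⁻¹ • ∫ x, W x p.2 • f (x, p.2) ∂ν := by
    rw [Kernel.withDensity_apply _ (hW.comp measurable_swap).coe_nnreal_ennreal, Kernel.const_apply,
      average_withDensity ν hW.of_uncurry_right]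
  simp only [← average_posterior]
  exact average_kernel_ae_eq_condExp measurable_snd measurable_fst disintegration swap_integrable

theorem stmt_9 {E : Type*} [MeasurableSpace E] [StandardBorelSpace E]
    (μ ν : Measure E) [IsProbabilityMeasure μ] [IsProbabilityMeasure ν]
    (W : E → E → ℝ≥0) (hW : Measurable (Function.uncurry W))
    (hdens : ∀ x : E, ∫⁻ x', (W x x' : ℝ≥0∞) ∂μ = 1)
    (κ : Kernel E E) [IsMarkovKernel κ]
    (hκ : ∀ x : E, κ x = μ.withDensity (fun x' => (W x x' : ℝ≥0∞)))
    (h : E → ℝ) (hh : Measurable h) (hbdd : ∃ C : ℝ, ∀ x, |h x| ≤ C) :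
    (fun p : E × E =>
        (∫ x, h x * (W x p.2 : ℝ) ∂ν) / (∫ x, (W x p.2 : ℝ) ∂ν))
      =ᵐ[ν.compProd κ]
      (ν.compProd κ)[fun p : E × E => h p.1 |
        MeasurableSpace.comap (Prod.snd : E × E → E) inferInstance] := by
  obtain ⟨C, hC⟩ := hbdd
  have h_integrable : Integrable (fun p : E × E => h p.1) (ν ⊗ₘ κ) :=
    .of_bound (hh.comp measurable_fst).aestronglyMeasurable C (.of_forall fun p => hC p.1)
  simpa only [div_eq_inv_mul, mul_comm (h _), NNReal.smul_def, smul_eq_mul] using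
    stmt_9_general μ ν hW κ (.of_forall hκ) h_integrable
end

section
/- Kernel Bayes formula with auxiliary variables: let E, F be standard Borel spaces, μ a probability measure on E, ν a probability measure on E × F (the law of (X, Z)), and W : E × E → ℝ≥0 jointly measurable with ∫ W(x, x') dμ(x') = 1 for all x. Let κ be the Markov kernel from E × F to E given by κ(x, z) = μ.withDensity(W(x, ·)) (depending only on x), and let P = ν ⊗ κ be the law of ((X, Z), X') on (E × F) × E. Then for every measurable set B ⊆ E × F, defining d(x') = ∫_{E×F} W(x, x') dν(x, z) and N_B(x') = ∫_{E×F} 1_B(x, z) · W(x, x') dν(x, z), the function x' ↦ N_B(x') / d(x') (set to 0 where d vanishes), composed with the second projection, is P-almost-everywhere equal to the conditional expectation of the indicator 1_B ∘ fst given the σ-algebra generated by the second coordinate; i.e., P((X, Z) ∈ B | X' = x') = N_B(x') / d(x'). -/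
open MeasureTheory ProbabilityTheory
open scoped NNReal ENNReal

/-!
If `(X, Y)` has joint density `w` with respect to `ν.prod μ`, then the law of `Y` has density
`d y = ∫ x, w (x, y) ∂ν` with respect to `μ`. By Fubini, `d y` times the weighted mean of `f (·, y)`
integrates over `A` to the integral of `f` over the event `Y ∈ A`, which is the defining property
of the conditional expectation. The points `y` with `d y = 0` cost nothing: there `w (·, y)`
vanishes almost everywhere, and so does the numerator. The compound measure `ν ⊗ₘ κ` is of this
form, with joint density `W`.
-/

section JointDensity

variable {Ω Y V : Type*} [MeasurableSpace Ω] [MeasurableSpace Y]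
  [NormedAddCommGroup V] [NormedSpace ℝ V]

/-- The mean of `f` under the normalization of the measure with density `w` with respect to `ν`.
It is `0` when the total weight is zero or infinite. -/
noncomputable def weightedMean (ν : Measure Ω) (w : Ω → ℝ≥0) (f : Ω → V) : V :=
  (∫ x, (w x : ℝ) ∂ν)⁻¹ • ∫ x, w x • f x ∂ν

lemma integral_smul_weightedMean {ν : Measure Ω} {w : Ω → ℝ≥0}
    (hw : Integrable (fun x => (w x : ℝ)) ν) (f : Ω → V) :
    (∫ x, (w x : ℝ) ∂ν) • weightedMean ν w f = ∫ x, w x • f x ∂ν := by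
  by_cases hmass : ∫ x, (w x : ℝ) ∂ν = 0
  · have hw_zero : ∀ᵐ x ∂ν, (w x : ℝ) = 0 :=
      (integral_eq_zero_iff_of_nonneg (fun x => (w x).coe_nonneg) hw).mp hmass
    rw [hmass, zero_smul, integral_eq_zero_of_ae]
    filter_upwards [hw_zero] with x hx
    simp [NNReal.smul_def, hx]
  · exact smul_inv_smul₀ hmass _

variable {ν : Measure Ω} {μ : Measure Y} [SFinite ν] [SFinite μ]

lemma setIntegral_prod_snd_preimage {f : Ω × Y → V} (hf : Integrable f (ν.prod μ)) (s : Set Y) :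
    ∫ q in Prod.snd ⁻¹' s, f q ∂(ν.prod μ) = ∫ y in s, ∫ x, f (x, y) ∂ν ∂μ := by
  have hrestrict : (ν.prod μ).restrict (Prod.snd ⁻¹' s) = ν.prod (μ.restrict s) := by
    rw [← Set.univ_prod, ← Measure.prod_restrict, Measure.restrict_univ]
  rw [hrestrict, integral_prod_symm _ (hrestrict ▸ hf.restrict)]

lemma snd_withDensity_prod {w : Ω × Y → ℝ≥0∞} (hw : Measurable w) :
    ((ν.prod μ).withDensity w).snd = μ.withDensity fun y => ∫⁻ x, w (x, y) ∂ν := by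
  ext s hs
  rw [Measure.snd_apply hs, withDensity_apply _ (measurable_snd hs), withDensity_apply _ hs,
    ← Set.univ_prod, ← Measure.prod_restrict, Measure.restrict_univ,
    lintegral_prod_symm _ hw.aemeasurable]

lemma ae_lintegral_lt_top_of_isFiniteMeasure_withDensity_prod {w : Ω × Y → ℝ≥0∞}
    [IsFiniteMeasure ((ν.prod μ).withDensity w)] (hw : Measurable w) :
    ∀ᵐ y ∂μ, ∫⁻ x, w (x, y) ∂ν < ∞ := by
  have hmass : ∫⁻ y, ∫⁻ x, w (x, y) ∂ν ∂μ ≠ ∞ := by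
    rw [← lintegral_prod_symm _ hw.aemeasurable, ← setLIntegral_univ, ← withDensity_apply _ .univ]
    exact measure_ne_top _ _
  exact ae_lt_top hw.lintegral_prod_left' hmass

lemma compProd_eq_withDensity_prod {κ : Kernel Ω Y} [IsSFiniteKernel κ] {w : Ω → Y → ℝ≥0∞}
    (hw : Measurable (Function.uncurry w)) (hκ : ∀ x, κ x = μ.withDensity (w x)) :
    ν ⊗ₘ κ = (ν.prod μ).withDensity fun q => w q.1 q.2 := by
  have hκ_eq : κ = (Kernel.const Ω μ).withDensity w := by
    ext1 x
    rw [hκ, Kernel.withDensity_apply _ hw, Kernel.const_apply]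
  subst hκ_eq
  rw [Measure.compProd_withDensity hw, Measure.compProd_const]

variable {w : Ω × Y → ℝ≥0} {f : Ω × Y → V}
  [IsFiniteMeasure ((ν.prod μ).withDensity fun q => (w q : ℝ≥0∞))]

lemma toReal_lintegral_smul_weightedMean_ae_eq (hw : Measurable w) :
    (fun y => (∫⁻ x, (w (x, y) : ℝ≥0∞) ∂ν).toReal •
      weightedMean ν (fun x => w (x, y)) fun x => f (x, y))
      =ᵐ[μ] fun y => ∫ x, w (x, y) • f (x, y) ∂ν := by
  filter_upwards [ae_lintegral_lt_top_of_isFiniteMeasure_withDensity_prod (ν := ν) (μ := μ)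
    hw.coe_nnreal_ennreal] with y hy
  have hwy : Measurable fun x => w (x, y) := hw.comp measurable_prodMk_right
  have hw_int : Integrable (fun x => (w (x, y) : ℝ)) ν :=
    integrable_toReal_of_lintegral_ne_top hwy.coe_nnreal_ennreal.aemeasurable hy.ne
  rw [← integral_toReal hwy.coe_nnreal_ennreal.aemeasurable (by simp)]
  exact integral_smul_weightedMean hw_int _

lemma integrable_weightedMean (hw : Measurable w)
    (hf : Integrable f ((ν.prod μ).withDensity fun q => (w q : ℝ≥0∞))) :
    Integrable (fun y => weightedMean ν (fun x => w (x, y)) fun x => f (x, y))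
      ((ν.prod μ).withDensity fun q => (w q : ℝ≥0∞)).snd := by
  have hwf := (integrable_withDensity_iff_integrable_smul hw).mp hf
  rw [snd_withDensity_prod hw.coe_nnreal_ennreal, integrable_withDensity_iff_integrable_smul'
    hw.coe_nnreal_ennreal.lintegral_prod_left'
    (ae_lintegral_lt_top_of_isFiniteMeasure_withDensity_prod hw.coe_nnreal_ennreal)]
  exact hwf.integral_prod_right.congr (toReal_lintegral_smul_weightedMean_ae_eq hw).symm

lemma setIntegral_snd_weightedMean (hw : Measurable w)
    (hf : Integrable f ((ν.prod μ).withDensity fun q => (w q : ℝ≥0∞)))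
    {s : Set Y} (hs : MeasurableSet s) :
    ∫ y in s, weightedMean ν (fun x => w (x, y)) (fun x => f (x, y))
        ∂((ν.prod μ).withDensity fun q => (w q : ℝ≥0∞)).snd =
      ∫ q in Prod.snd ⁻¹' s, f q ∂((ν.prod μ).withDensity fun q => (w q : ℝ≥0∞)) := by
  have hwf := (integrable_withDensity_iff_integrable_smul hw).mp hf
  have hmass : ∀ᵐ y ∂μ, ∫⁻ x, (w (x, y) : ℝ≥0∞) ∂ν < ∞ :=
    ae_lintegral_lt_top_of_isFiniteMeasure_withDensity_prod hw.coe_nnreal_ennreal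
  rw [snd_withDensity_prod hw.coe_nnreal_ennreal,
    setIntegral_withDensity_eq_setIntegral_toReal_smul
      hw.coe_nnreal_ennreal.lintegral_prod_left' (ae_restrict_of_ae hmass) _ hs,
    setIntegral_withDensity_eq_setIntegral_smul hw _ (measurable_snd hs),
    setIntegral_prod_snd_preimage hwf]
  exact integral_congr_ae (ae_restrict_of_ae (toReal_lintegral_smul_weightedMean_ae_eq hw))

theorem weightedMean_ae_eq_condExp_snd [CompleteSpace V] (hw : Measurable w)
    (hf : Integrable f ((ν.prod μ).withDensity fun q => (w q : ℝ≥0∞))) :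
    (fun q : Ω × Y => weightedMean ν (fun x => w (x, q.2)) fun x => f (x, q.2))
      =ᵐ[(ν.prod μ).withDensity fun q => (w q : ℝ≥0∞)]
      ((ν.prod μ).withDensity fun q => (w q : ℝ≥0∞))[f |
        MeasurableSpace.comap (Prod.snd : Ω × Y → Y) inferInstance] := by
  have hmean := integrable_weightedMean hw hf
  refine ae_eq_condExp_of_forall_setIntegral_eq measurable_snd.comap_le hf
    (fun _ _ _ => (hmean.comp_measurable measurable_snd).integrableOn) ?_
    (hmean.aestronglyMeasurable.comp_ae_measurable' measurable_snd.aemeasurable)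
  rintro _ ⟨s, hs, rfl⟩ -
  rw [← setIntegral_snd_weightedMean hw hf hs]
  exact (setIntegral_map hs hmean.aestronglyMeasurable measurable_snd.aemeasurable).symm

end JointDensity

theorem stmt_10_general {Ω Y V : Type*} [MeasurableSpace Ω] [MeasurableSpace Y]
    [NormedAddCommGroup V] [NormedSpace ℝ V] [CompleteSpace V]
    {ν : Measure Ω} [IsFiniteMeasure ν] {μ : Measure Y} [SFinite μ]
    {W : Ω → Y → ℝ≥0} (hW : Measurable (Function.uncurry W))
    {κ : Kernel Ω Y} [IsFiniteKernel κ]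
    (hκ : ∀ x, κ x = μ.withDensity fun y => (W x y : ℝ≥0∞))
    {f : Ω × Y → V} (hf : Integrable f (ν ⊗ₘ κ)) :
    (fun q : Ω × Y => weightedMean ν (fun x => W x q.2) fun x => f (x, q.2)) =ᵐ[ν ⊗ₘ κ]
      (ν ⊗ₘ κ)[f | MeasurableSpace.comap (Prod.snd : Ω × Y → Y) inferInstance] := by
  have hjoint : ν ⊗ₘ κ = (ν.prod μ).withDensity fun q => (W q.1 q.2 : ℝ≥0∞) :=
    compProd_eq_withDensity_prod (w := fun x y => (W x y : ℝ≥0∞)) hW.coe_nnreal_ennreal hκ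
  have : IsFiniteMeasure ((ν.prod μ).withDensity fun q => (W q.1 q.2 : ℝ≥0∞)) := by
    rw [← hjoint]
    infer_instance
  rw [hjoint] at hf ⊢
  exact weightedMean_ae_eq_condExp_snd (w := fun q => W q.1 q.2) hW hf

theorem stmt_10 {E F : Type*} [MeasurableSpace E] [StandardBorelSpace E]
    [MeasurableSpace F] [StandardBorelSpace F]
    (μ : Measure E) [IsProbabilityMeasure μ]
    (ν : Measure (E × F)) [IsProbabilityMeasure ν]
    (W : E → E → ℝ≥0) (hW : Measurable (Function.uncurry W))
    (hdens : ∀ x : E, ∫⁻ x', (W x x' : ℝ≥0∞) ∂μ = 1)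
    (κ : Kernel (E × F) E) [IsMarkovKernel κ]
    (hκ : ∀ p : E × F, κ p = μ.withDensity (fun x' => (W p.1 x' : ℝ≥0∞)))
    (B : Set (E × F)) (hB : MeasurableSet B) :
    (fun q : (E × F) × E =>
        (∫ p : E × F, B.indicator (fun _ => (1 : ℝ)) p * (W p.1 q.2 : ℝ) ∂ν) /
          (∫ p : E × F, (W p.1 q.2 : ℝ) ∂ν))
      =ᵐ[ν.compProd κ]
      (ν.compProd κ)[fun q : (E × F) × E => B.indicator (fun _ => (1 : ℝ)) q.1 |
        MeasurableSpace.comap (Prod.snd : (E × F) × E → E) inferInstance] := by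
  have hW' : Measurable (Function.uncurry fun (p : E × F) x' => W p.1 x') :=
    hW.comp (measurable_fst.fst.prodMk measurable_snd)
  have hB_int : Integrable (fun q : (E × F) × E => B.indicator (fun _ => (1 : ℝ)) q.1)
      (ν.compProd κ) := (integrable_const 1).indicator (measurable_fst hB)
  simpa only [weightedMean, NNReal.smul_def, smul_eq_mul, div_eq_inv_mul, mul_comm]
    using stmt_10_general hW' hκ hB_int
end

section
/- Conditional coverage deviation formula (reduction of the paper's Lemma 1): under the kernel-resampling setup with auxiliary variables — E, F standard Borel, μ a probability measure on E, ν a probability measure on E × F, W : E × E → ℝ≥0 jointly measurable with ∫ W(x, x') dμ(x') = 1 for all x, κ(x, z) = μ.withDensity(W(x, ·)), P = ν ⊗ κ the law of ((X, Z), X') — let B ⊆ E × F be measurable, α ∈ (0, 1), γ ∈ ℝ, and m : E → ℝ measurable such that for μ-almost every x', ∫_{E×F} W(x, x') · (1_B(x, z) − (1 − α)) dν(x, z) = −γ · m(x'). Then for μ-almost every x' with d(x') = ∫_{E×F} W(x, x') dν(x, z) > 0, the conditional probability satisfies P((X, Z) ∈ B | X' = x') = 1 − α − γ · m(x') / d(x').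 -/
open MeasureTheory ProbabilityTheory
open scoped NNReal ENNReal

/-!
By Bayes' formula, conditional expectations under a measure with density `w` with respect to `Q`
are quotients `Q[w • f | m] / Q[w | m]`. The law of `((X, Z), X')` has density `W(x, x')` with
respect to the product `ν × μ`, and conditioning a product measure on the second coordinate
integrates out the first one. Applied to `1_B - (1 - α)`, the quotient is
`-γ m(x') / d(x')` by the assumption on `m`.
-/

section BayesFormula

variable {Ω V : Type*} {m m₀ : MeasurableSpace Ω} {Q : Measure Ω} {w : Ω → ℝ≥0}

theorem aemeasurable_of_integrable_coe_nnreal (hw : Integrable (fun ω => (w ω : ℝ)) Q) :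
    AEMeasurable w Q := by
  simpa using hw.aemeasurable.real_toNNReal

theorem isFiniteMeasure_withDensity_of_integrable_coe_nnreal
    (hw : Integrable (fun ω => (w ω : ℝ)) Q) :
    IsFiniteMeasure (Q.withDensity fun ω => (w ω : ℝ≥0∞)) := by
  simpa using isFiniteMeasure_withDensity_ofReal hw.2

theorem ae_withDensity_condExp_pos (hm : m ≤ m₀) [SigmaFinite (Q.trim hm)]
    (hw : Integrable (fun ω => (w ω : ℝ)) Q) :
    ∀ᵐ ω ∂Q.withDensity (fun ω => (w ω : ℝ≥0∞)), 0 < (Q[fun ω => (w ω : ℝ) | m]) ω := by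
  let s : Set Ω := {ω | (Q[fun ω => (w ω : ℝ) | m]) ω ≤ 0}
  have hs : MeasurableSet[m] s :=
    measurableSet_le stronglyMeasurable_condExp.measurable measurable_const
  have integral_nonpos : ∫ ω in s, (w ω : ℝ) ∂Q ≤ 0 := by
    rw [← setIntegral_condExp hm hw hs]
    exact setIntegral_nonpos (hm s hs) fun _ hω => hω
  have w_eq_zero : (fun ω => (w ω : ℝ)) =ᵐ[Q.restrict s] 0 := by
    have w_nonneg : (0 : Ω → ℝ) ≤ fun ω => (w ω : ℝ) := fun ω => (w ω).coe_nonneg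
    rw [← integral_eq_zero_iff_of_nonneg w_nonneg hw.integrableOn]
    exact integral_nonpos.antisymm (integral_nonneg w_nonneg)
  rw [ae_withDensity_iff' (aemeasurable_of_integrable_coe_nnreal hw).coe_nnreal_ennreal]
  filter_upwards [(ae_restrict_iff' (hm s hs)).1 w_eq_zero] with ω hω w_ne_zero
  contrapose! w_ne_zero
  simpa using hω w_ne_zero

theorem condExp_smul_condExp_withDensity [NormedAddCommGroup V] [NormedSpace ℝ V]
    [CompleteSpace V] (hm : m ≤ m₀) [SigmaFinite (Q.trim hm)]
    (hw : Integrable (fun ω => (w ω : ℝ)) Q) {f : Ω → V}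
    (hf : Integrable f (Q.withDensity fun ω => (w ω : ℝ≥0∞))) :
    Q[fun ω => (w ω : ℝ) | m] • (Q.withDensity fun ω => (w ω : ℝ≥0∞))[f | m]
      =ᵐ[Q] Q[fun ω => (w ω : ℝ) • f ω | m] := by
  have := isFiniteMeasure_withDensity_of_integrable_coe_nnreal hw
  have w_aemeasurable := aemeasurable_of_integrable_coe_nnreal hw
  set g := (Q.withDensity fun ω => (w ω : ℝ≥0∞))[f | m]
  have integrable_smul {h : Ω → V} (hh : Integrable h (Q.withDensity fun ω => (w ω : ℝ≥0∞))) :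
      Integrable (fun ω => (w ω : ℝ) • h ω) Q :=
    (integrable_withDensity_iff_integrable_coe_smul₀ w_aemeasurable).1 hh
  have setIntegral_smul {s : Set Ω} (hs : MeasurableSet[m] s) (h : Ω → V) :
      ∫ ω in s, (w ω : ℝ) • h ω ∂Q = ∫ ω in s, h ω ∂Q.withDensity fun ω => (w ω : ℝ≥0∞) :=
    (setIntegral_withDensity_eq_setIntegral_smul₀ w_aemeasurable.restrict h (hm s hs)).symm
  calc Q[fun ω => (w ω : ℝ) | m] • g
    _ =ᵐ[Q] Q[fun ω => (w ω : ℝ) • g ω | m] :=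
      (condExp_smul_of_aestronglyMeasurable_right hw (integrable_smul integrable_condExp)
        stronglyMeasurable_condExp.aestronglyMeasurable).symm
    _ =ᵐ[Q] Q[fun ω => (w ω : ℝ) • f ω | m] := by
      refine ae_eq_condExp_of_forall_setIntegral_eq hm (integrable_smul hf)
        (fun _ _ _ => integrable_condExp.integrableOn) (fun s hs _ => ?_)
        stronglyMeasurable_condExp.aestronglyMeasurable
      rw [setIntegral_condExp hm (integrable_smul integrable_condExp) hs, setIntegral_smul hs,
        setIntegral_condExp hm hf hs, setIntegral_smul hs]

end BayesFormula

theorem sigmaFinite_trim_comap {Ω Y : Type*} [MeasurableSpace Ω] [MeasurableSpace Y]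
    {Q : Measure Ω} {μ : Measure Y} [SigmaFinite μ] {g : Ω → Y} (hg : MeasurePreserving g Q μ) :
    SigmaFinite (Q.trim hg.measurable.comap_le) :=
  .of_map _ (comap_measurable g).aemeasurable <| by
    rwa [map_trim_comap hg.measurable, hg.map_eq]

section Product

variable {X Y V : Type*} [MeasurableSpace X] [mY : MeasurableSpace Y]
  [NormedAddCommGroup V] [NormedSpace ℝ V]

theorem setIntegral_snd_preimage_prod {ν : Measure X} [SFinite ν] {μ : Measure Y} [SFinite μ]
    {f : X × Y → V} (hf : Integrable f (ν.prod μ)) (A : Set Y) :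
    ∫ q in Prod.snd ⁻¹' A, f q ∂ν.prod μ = ∫ y in A, ∫ x, f (x, y) ∂ν ∂μ := by
  have restrict_eq : (ν.prod μ).restrict (Prod.snd ⁻¹' A) = ν.prod (μ.restrict A) := by
    rw [← Set.univ_prod, ← Measure.prod_restrict, Measure.restrict_univ]
  rw [restrict_eq]
  exact integral_prod_symm f (restrict_eq ▸ hf.restrict)

variable [CompleteSpace V] {ν : Measure X} [IsProbabilityMeasure ν] {μ : Measure Y} [SigmaFinite μ]

theorem condExp_snd_prod {f : X × Y → V} (hf : Integrable f (ν.prod μ)) :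
    (ν.prod μ)[f | mY.comap Prod.snd] =ᵐ[ν.prod μ] fun q => ∫ x, f (x, q.2) ∂ν := by
  have := sigmaFinite_trim_comap (measurePreserving_snd (μ := ν) (ν := μ))
  have integrable_snd : Integrable (fun q : X × Y => ∫ x, f (x, q.2) ∂ν) (ν.prod μ) :=
    hf.integral_prod_right.comp_snd ν
  refine (ae_eq_condExp_of_forall_setIntegral_eq measurable_snd.comap_le hf
    (fun _ _ _ => integrable_snd.integrableOn) ?_ ?_).symm
  · rintro _ ⟨A, -, rfl⟩ -
    simp [setIntegral_snd_preimage_prod integrable_snd, setIntegral_snd_preimage_prod hf]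
  · have measurable_integral :
        AEStronglyMeasurable (fun y => ∫ x, f (x, y) ∂ν) ((ν.prod μ).map Prod.snd) := by
      simpa using hf.integral_prod_right.aestronglyMeasurable
    exact measurable_integral.comp_ae_measurable' measurable_snd.aemeasurable

theorem condExp_snd_prod_withDensity {w : X × Y → ℝ≥0}
    (hw : Integrable (fun q => (w q : ℝ)) (ν.prod μ)) {f : X × Y → V}
    (hf : Integrable f ((ν.prod μ).withDensity fun q => (w q : ℝ≥0∞))) :
    ((ν.prod μ).withDensity fun q => (w q : ℝ≥0∞))[f | mY.comap Prod.snd]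
      =ᵐ[(ν.prod μ).withDensity fun q => (w q : ℝ≥0∞)]
      fun q => (∫ x, (w (x, q.2) : ℝ) ∂ν)⁻¹ • ∫ x, (w (x, q.2) : ℝ) • f (x, q.2) ∂ν := by
  have := sigmaFinite_trim_comap (measurePreserving_snd (μ := ν) (ν := μ))
  have integrable_smul : Integrable (fun q => (w q : ℝ) • f q) (ν.prod μ) :=
    (integrable_withDensity_iff_integrable_coe_smul₀
      (aemeasurable_of_integrable_coe_nnreal hw)).1 hf
  have withDensity_ac := withDensity_absolutelyContinuous (ν.prod μ) fun q => (w q : ℝ≥0∞)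
  filter_upwards [ae_withDensity_condExp_pos measurable_snd.comap_le hw,
    withDensity_ac.ae_le (condExp_smul_condExp_withDensity measurable_snd.comap_le hw hf),
    withDensity_ac.ae_le (condExp_snd_prod hw),
    withDensity_ac.ae_le (condExp_snd_prod integrable_smul)]
    with q marginal_pos bayes marginal_eq numerator_eq
  rw [← marginal_eq, ← numerator_eq, ← bayes, Pi.smul_apply', inv_smul_smul₀ marginal_pos.ne']

end Product

section KernelWithDensity

variable {X Y V : Type*} [MeasurableSpace X] [mY : MeasurableSpace Y] {ν : Measure X}
  {μ : Measure Y} {κ : Kernel X Y} {w : X → Y → ℝ≥0}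

theorem compProd_eq_prod_withDensity [SFinite ν] [SFinite μ]
    (hw : Measurable (Function.uncurry w))
    (hκ : ∀ x, κ x = μ.withDensity fun y => (w x y : ℝ≥0∞)) :
    ν ⊗ₘ κ = (ν.prod μ).withDensity fun q => (w q.1 q.2 : ℝ≥0∞) := by
  have hw' : Measurable (Function.uncurry fun x y => (w x y : ℝ≥0∞)) := hw.coe_nnreal_ennreal
  have κ_eq : κ = (Kernel.const X μ).withDensity fun x y => (w x y : ℝ≥0∞) := by
    ext1 x
    rw [hκ, Kernel.withDensity_apply _ hw', Kernel.const_apply]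
  rw [κ_eq, Measure.compProd_withDensity hw', Measure.compProd_const]

theorem condExp_snd_compProd_of_eq_withDensity [NormedAddCommGroup V] [NormedSpace ℝ V]
    [CompleteSpace V] [IsProbabilityMeasure ν] [SigmaFinite μ] [IsFiniteKernel κ]
    (hw : Measurable (Function.uncurry w))
    (hκ : ∀ x, κ x = μ.withDensity fun y => (w x y : ℝ≥0∞))
    {f : X × Y → V} (hf : Integrable f (ν ⊗ₘ κ)) :
    (ν ⊗ₘ κ)[f | mY.comap Prod.snd] =ᵐ[ν ⊗ₘ κ]
      fun q => (∫ x, (w x q.2 : ℝ) ∂ν)⁻¹ • ∫ x, (w x q.2 : ℝ) • f (x, q.2) ∂ν := by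
  have law_eq := compProd_eq_prod_withDensity (ν := ν) hw hκ
  have integrable_w : Integrable (fun q : X × Y => (w q.1 q.2 : ℝ)) (ν.prod μ) := by
    have integrable_one := integrable_const (μ := ν ⊗ₘ κ) (1 : ℝ)
    rw [law_eq] at integrable_one
    simpa [Function.uncurry_def] using
      (integrable_withDensity_iff_integrable_coe_smul hw).1 integrable_one
  rw [law_eq] at hf ⊢
  exact condExp_snd_prod_withDensity integrable_w hf

theorem ae_compProd_snd_of_ae [SFinite ν] [SFinite μ]
    (hκ : ∀ x, κ x ≪ μ) {p : Y → Prop} (hp : ∀ᵐ y ∂μ, p y) : ∀ᵐ q ∂ν ⊗ₘ κ, p q.2 := by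
  have compProd_ac : ν ⊗ₘ κ ≪ ν.prod μ := by
    rw [← Measure.compProd_const]
    exact .compProd_right (.of_forall fun x => by simpa using hκ x)
  exact compProd_ac.ae_le (Measure.quasiMeasurePreserving_snd.ae hp)

end KernelWithDensity

theorem condExp_sub_const {Ω V : Type*} {m m₀ : MeasurableSpace Ω} {P : Measure Ω}
    [IsFiniteMeasure P] [NormedAddCommGroup V] [NormedSpace ℝ V] [CompleteSpace V]
    (hm : m ≤ m₀) {f : Ω → V} (hf : Integrable f P) (c : V) :
    P[fun ω => f ω - c | m] =ᵐ[P] fun ω => (P[f | m]) ω - c := by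
  filter_upwards [condExp_sub hf (integrable_const c) m] with ω sub_eq
  exact sub_eq.trans (by rw [Pi.sub_apply, condExp_const hm])

theorem stmt_11_general {X Y : Type*} [MeasurableSpace X] [MeasurableSpace Y]
    (μ : Measure Y) [SigmaFinite μ] (ν : Measure X) [IsProbabilityMeasure ν]
    (W : X → Y → ℝ≥0) (hW : Measurable (Function.uncurry W))
    (κ : Kernel X Y) [IsFiniteKernel κ]
    (hκ : ∀ x, κ x = μ.withDensity fun y => (W x y : ℝ≥0∞))
    (f : X × Y → ℝ) (hf : Integrable f (ν ⊗ₘ κ)) (c : ℝ) (r : Y → ℝ)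
    (hgap : ∀ᵐ y ∂μ, ∫ x, (W x y : ℝ) * (f (x, y) - c) ∂ν = r y) :
    (fun q : X × Y => c + r q.2 / ∫ x, (W x q.2 : ℝ) ∂ν)
      =ᵐ[ν ⊗ₘ κ] (ν ⊗ₘ κ)[f | MeasurableSpace.comap Prod.snd inferInstance] := by
  have gap_snd : ∀ᵐ q ∂ν ⊗ₘ κ, ∫ x, (W x q.2 : ℝ) * (f (x, q.2) - c) ∂ν = r q.2 :=
    ae_compProd_snd_of_ae (fun x => hκ x ▸ withDensity_absolutelyContinuous μ _) hgap
  filter_upwards [gap_snd, condExp_sub_const measurable_snd.comap_le hf c,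
    condExp_snd_compProd_of_eq_withDensity hW hκ (hf.sub (integrable_const c))]
    with q gap_eq sub_eq deviation_eq
  calc c + r q.2 / ∫ x, (W x q.2 : ℝ) ∂ν
    _ = c + (∫ x, (W x q.2 : ℝ) ∂ν)⁻¹ * ∫ x, (W x q.2 : ℝ) * (f (x, q.2) - c) ∂ν := by
      rw [gap_eq, div_eq_inv_mul]
    _ = c + ((ν ⊗ₘ κ)[fun q => f q - c | MeasurableSpace.comap Prod.snd inferInstance]) q :=
      congrArg (c + ·) deviation_eq.symm
    _ = ((ν ⊗ₘ κ)[f | MeasurableSpace.comap Prod.snd inferInstance]) q := by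
      rw [sub_eq, add_sub_cancel]

theorem stmt_11 {E F : Type*} [MeasurableSpace E] [StandardBorelSpace E]
    [MeasurableSpace F] [StandardBorelSpace F]
    (μ : Measure E) [IsProbabilityMeasure μ]
    (ν : Measure (E × F)) [IsProbabilityMeasure ν]
    (W : E → E → ℝ≥0) (hW : Measurable (Function.uncurry W))
    (hdens : ∀ x : E, ∫⁻ x', (W x x' : ℝ≥0∞) ∂μ = 1)
    (κ : Kernel (E × F) E) [IsMarkovKernel κ]
    (hκ : ∀ p : E × F, κ p = μ.withDensity (fun x' => (W p.1 x' : ℝ≥0∞)))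
    (B : Set (E × F)) (hB : MeasurableSet B)
    (α : ℝ) (hα : α ∈ Set.Ioo (0 : ℝ) 1) (γ : ℝ)
    (m : E → ℝ) (hm : Measurable m)
    (hgap : ∀ᵐ x' ∂μ,
      ∫ p : E × F, (W p.1 x' : ℝ) * (B.indicator (fun _ => (1 : ℝ)) p - (1 - α)) ∂ν
        = -γ * m x') :
    ∃ G : E → ℝ,
      ((fun q : (E × F) × E => G q.2)
        =ᵐ[ν.compProd κ]
        (ν.compProd κ)[fun q : (E × F) × E => B.indicator (fun _ => (1 : ℝ)) q.1 |
          MeasurableSpace.comap (Prod.snd : (E × F) × E → E) inferInstance]) ∧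
      ∀ᵐ x' ∂μ, 0 < ∫ p : E × F, (W p.1 x' : ℝ) ∂ν →
        G x' = 1 - α - γ * m x' / ∫ p : E × F, (W p.1 x' : ℝ) ∂ν := by
  have integrable_indicator :
      Integrable (fun q : (E × F) × E => B.indicator (fun _ => (1 : ℝ)) q.1) (ν ⊗ₘ κ) :=
    (integrable_const 1).indicator (measurable_fst hB)
  -- The junk value at `d(x') = 0` is harmless: almost surely `d(X') > 0`.
  refine ⟨fun x' => 1 - α - γ * m x' / ∫ p, (W p.1 x' : ℝ) ∂ν, ?_, .of_forall fun _ _ => rfl⟩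
  simpa only [neg_mul, neg_div, ← sub_eq_add_neg] using
    stmt_11_general μ ν (fun p => W p.1) (by fun_prop) κ hκ _ integrable_indicator (1 - α) _ hgap
end

section
/- Exchangeable order-statistic coverage: let n ≥ 1 and let S : Ω → (Fin (n+1) → ℝ) be a random vector on a probability space (Ω, P) whose law is exchangeable, i.e., for every permutation σ of Fin (n+1), the vector (S_{σ(0)}, …, S_{σ(n)}) has the same law as (S_0, …, S_n). Fix k with 1 ≤ k ≤ n, and let S_{(k)}(ω) denote the k-th smallest value among the first n coordinates S_0(ω), …, S_{n−1}(ω). Then P(S_n ≤ S_{(k)}) ≥ k / (n + 1). -/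
open MeasureTheory

/-!
Call the strict rank of a coordinate the number of coordinates strictly below it. For `k` at most
the number of coordinates, every vector has at least `k` coordinates of strict rank below `k`, ties
included. Under an exchangeable law all coordinates are equally likely to have strict rank below
`k`, so each of the `n + 1` coordinates does so with probability at least `k / (n + 1)`. Finally, if
fewer than `k` of the first `n` coordinates lie strictly below the last one, then the last one is at
most their `k`-th smallest value.
-/

open scoped Finset

section SortedList

variable {α : Type*} [LinearOrder α] {t : α} {k : ℕ}

lemma le_getElem_of_countP_lt_le {l : List α} (hl : l.SortedLE) (hk : k < l.length)
    (h : l.countP (· < t) ≤ k) : t ≤ l[k] := by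
  by_contra! hlt
  have take_lt : ∀ a ∈ l.take (k + 1), a < t := by
    intro a ha
    obtain ⟨i, hi, rfl⟩ := List.mem_take_iff_getElem.mp ha
    exact (hl.getElem_le_getElem_of_le (by lia)).trans_lt hlt
  have countP_take : (l.take (k + 1)).countP (· < t) = k + 1 := by
    rw [List.countP_eq_length.mpr (by simpa using take_lt), List.length_take_of_le hk]
  have countP_take_le := (List.take_sublist (k + 1) l).countP_le (p := (· < t))
  lia

lemma countP_ofFn {β : Type*} {n : ℕ} (f : Fin n → β) (p : β → Prop) [DecidablePred p] :
    (List.ofFn f).countP p = #{i | p (f i)} := by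
  rw [← Multiset.coe_countP, ← Fin.univ_val_map, Multiset.countP_map]
  rfl

lemma le_getD_insertionSort_ofFn {n : ℕ} {f : Fin n → α} (hk : k < n)
    (h : #{i | f i < t} ≤ k) (d : α) :
    t ≤ ((List.ofFn f).insertionSort (· ≤ ·)).getD k d := by
  have hk' : k < ((List.ofFn f).insertionSort (· ≤ ·)).length := by simpa using hk
  rw [List.getD_eq_getElem _ _ hk']
  refine le_getElem_of_countP_lt_le List.sortedLE_insertionSort hk' ?_
  rwa [(List.perm_insertionSort _ _).countP_eq, countP_ofFn]

end SortedList

section StrictRank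

variable {ι α : Type*} [Fintype ι]

/-- The strict rank of the coordinate `i` of `x`: the number of coordinates of `x` strictly below
`x i`. Ranks start at `0`, and equal coordinates share the same rank. -/
def strictRank [LT α] [DecidableLT α] (x : ι → α) (i : ι) : ℕ := #{j | x j < x i}

lemma strictRank_comp_perm [LT α] [DecidableLT α] (x : ι → α) (σ : Equiv.Perm ι) (i : ι) :
    strictRank (fun j => x (σ j)) i = strictRank x (σ i) :=
  Finset.card_equiv σ (by simp)

lemma le_card_strictRank_lt [Preorder α] [DecidableLT α] (x : ι → α) {k : ℕ}
    (hk : k ≤ Fintype.card ι) : k ≤ #{i | strictRank x i < k} := by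
  by_contra! hlt
  have large_rank_nonempty : ({i | k ≤ strictRank x i} : Finset ι).Nonempty := by
    by_contra! hempty
    have all_lt : ∀ i, strictRank x i < k := by
      simpa [Finset.filter_eq_empty_iff] using hempty
    simp only [all_lt, Finset.filter_true, Finset.card_univ] at hlt
    lia
  obtain ⟨i, hi, hmin⟩ := Finset.exists_minimalFor x _ large_rank_nonempty
  have below_subset :
      ({j | x j < x i} : Finset ι) ⊆ ({j | strictRank x j < k} : Finset ι) := by
    intro j hj
    simp only [Finset.mem_filter, Finset.mem_univ, true_and] at hj ⊢
    by_contra! hkj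
    exact hj.not_ge (hmin (by simpa using hkj) hj.le)
  have hki : k ≤ strictRank x i := by simpa using hi
  exact (hki.trans (Finset.card_le_card below_subset)).not_gt hlt

lemma card_castSucc_lt_last_le_strictRank [LT α] [DecidableLT α] {n : ℕ} (x : Fin (n + 1) → α) :
    #{i : Fin n | x i.castSucc < x (Fin.last n)} ≤ strictRank x (Fin.last n) :=
  Finset.card_le_card_of_injOn Fin.castSucc (by simp [Set.MapsTo])
    (Fin.castSucc_injective n).injOn

lemma measurable_strictRank [LinearOrder α] [TopologicalSpace α] [OrderClosedTopology α]
    [SecondCountableTopology α] [MeasurableSpace α] [OpensMeasurableSpace α] (i : ι) :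
    Measurable fun x : ι → α => strictRank x i := by
  simp only [strictRank, Finset.card_filter]
  exact Finset.measurable_sum _ fun j _ =>
    .ite (measurableSet_lt (measurable_pi_apply j) (measurable_pi_apply i))
      measurable_const measurable_const

end StrictRank

lemma natCast_mul_measure_univ_le_sum_measure {X ι : Type*} [MeasurableSpace X] [Fintype ι]
    (μ : Measure X) {A : ι → Set X} [∀ i, DecidablePred (· ∈ A i)]
    (hA : ∀ i, MeasurableSet (A i)) {k : ℕ} (hk : ∀ x, k ≤ #{i | x ∈ A i}) :
    k * μ Set.univ ≤ ∑ i, μ (A i) := by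
  calc k * μ Set.univ = ∫⁻ _, k ∂μ := (lintegral_const _).symm
    _ ≤ ∫⁻ x, ∑ i, (A i).indicator 1 x ∂μ := by
      refine lintegral_mono fun x => ?_
      simpa [Set.indicator_apply] using hk x
    _ = ∑ i, μ (A i) := by
      rw [lintegral_finsetSum _ fun i _ => measurable_one.indicator (hA i)]
      simp only [lintegral_indicator_one (hA _)]

section Exchangeable

variable {ι α : Type*} [MeasurableSpace α]

/-- A law on `ι → α` is exchangeable if it is invariant under all permutations of the
coordinates. -/
def IsExchangeable (μ : Measure (ι → α)) : Prop :=
  ∀ σ : Equiv.Perm ι, μ.map (fun x i => x (σ i)) = μ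

lemma isExchangeable_map_iff {Ω : Type*} [MeasurableSpace Ω] {P : Measure Ω} {S : Ω → ι → α}
    (hS : AEMeasurable S P) :
    IsExchangeable (P.map S) ↔
      ∀ σ : Equiv.Perm ι, P.map (fun ω i => S ω (σ i)) = P.map S := by
  refine forall_congr' fun σ => ?_
  have permute_measurable : Measurable fun (x : ι → α) i => x (σ i) := by fun_prop
  rw [AEMeasurable.map_map_of_aemeasurable permute_measurable.aemeasurable hS]
  rfl

variable [Fintype ι] [LinearOrder α] [TopologicalSpace α] [OrderClosedTopology α]
  [SecondCountableTopology α] [OpensMeasurableSpace α] {μ : Measure (ι → α)}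

lemma measurableSet_strictRank_lt (i : ι) (k : ℕ) :
    MeasurableSet {x : ι → α | strictRank x i < k} :=
  measurableSet_lt (measurable_strictRank i) measurable_const

lemma IsExchangeable.measure_strictRank_lt_eq (hμ : IsExchangeable μ) (i j : ι) (k : ℕ) :
    μ {x | strictRank x i < k} = μ {x | strictRank x j < k} := by
  classical
  calc μ {x | strictRank x i < k}
      = μ {x | strictRank (fun l => x (Equiv.swap j i l)) j < k} := by
        simp only [strictRank_comp_perm, Equiv.swap_apply_left]
    _ = μ.map (fun x l => x (Equiv.swap j i l)) {x | strictRank x j < k} :=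
        (Measure.map_apply (by fun_prop) (measurableSet_strictRank_lt j k)).symm
    _ = μ {x | strictRank x j < k} := by rw [hμ]

lemma IsExchangeable.natCast_mul_measure_univ_le (hμ : IsExchangeable μ) (i : ι) {k : ℕ}
    (hk : k ≤ Fintype.card ι) :
    k * μ Set.univ ≤ Fintype.card ι * μ {x | strictRank x i < k} := by
  calc k * μ Set.univ ≤ ∑ j, μ {x | strictRank x j < k} :=
        natCast_mul_measure_univ_le_sum_measure μ (measurableSet_strictRank_lt · k)
          (le_card_strictRank_lt · hk)
    _ = Fintype.card ι * μ {x | strictRank x i < k} := by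
        simp only [hμ.measure_strictRank_lt_eq _ i, Finset.sum_const, Finset.card_univ,
          nsmul_eq_mul]

end Exchangeable

lemma last_le_getD_insertionSort_of_strictRank_le {α : Type*} [LinearOrder α] {n k : ℕ}
    {x : Fin (n + 1) → α} (hkn : k < n) (hx : strictRank x (Fin.last n) ≤ k) (d : α) :
    x (Fin.last n) ≤
      ((List.ofFn fun i : Fin n => x i.castSucc).insertionSort (· ≤ ·)).getD k d :=
  le_getD_insertionSort_ofFn hkn ((card_castSucc_lt_last_le_strictRank x).trans hx) d

theorem stmt_12_general {Ω α : Type*} [MeasurableSpace Ω] [LinearOrder α] [TopologicalSpace α]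
    [OrderClosedTopology α] [SecondCountableTopology α] [MeasurableSpace α]
    [OpensMeasurableSpace α] (P : Measure Ω) [IsProbabilityMeasure P] {n : ℕ}
    {S : Ω → Fin (n + 1) → α} (hS : AEMeasurable S P)
    (hexch : ∀ σ : Equiv.Perm (Fin (n + 1)), P.map (fun ω i => S ω (σ i)) = P.map S)
    {k : ℕ} (hkn : k < n) (d : α) :
    ENNReal.ofReal (((k + 1 : ℕ) : ℝ) / ((n : ℝ) + 1)) ≤
      P {ω | S ω (Fin.last n) ≤
        ((List.ofFn fun i : Fin n => S ω i.castSucc).insertionSort (· ≤ ·)).getD k d} := by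
  have := Measure.isProbabilityMeasure_map hS
  have rank_bound := ((isExchangeable_map_iff hS).mpr hexch).natCast_mul_measure_univ_le
    (Fin.last n) (k := k + 1) (by rw [Fintype.card_fin]; lia)
  rw [measure_univ, mul_one, Fintype.card_fin] at rank_bound
  calc ENNReal.ofReal (((k + 1 : ℕ) : ℝ) / ((n : ℝ) + 1)) = (k + 1 : ℕ) / (n + 1 : ℕ) := by
        rw [← Nat.cast_succ n, ENNReal.ofReal_div_of_pos (by positivity), ENNReal.ofReal_natCast,
          ENNReal.ofReal_natCast]
    _ ≤ P.map S {x | strictRank x (Fin.last n) < k + 1} := ENNReal.div_le_of_le_mul' rank_bound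
    _ = P {ω | strictRank (S ω) (Fin.last n) < k + 1} :=
        Measure.map_apply_of_aemeasurable hS (measurableSet_strictRank_lt _ _)
    _ ≤ _ := measure_mono fun _ hω =>
        last_le_getD_insertionSort_of_strictRank_le hkn (Nat.le_of_lt_succ hω) d

theorem stmt_12 {Ω : Type*} [MeasurableSpace Ω]
    (P : Measure Ω) [IsProbabilityMeasure P]
    (n : ℕ) (hn : 1 ≤ n)
    (S : Ω → Fin (n + 1) → ℝ) (hS : Measurable S)
    (hexch : ∀ σ : Equiv.Perm (Fin (n + 1)),
      P.map (fun ω => fun i => S ω (σ i)) = P.map S)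
    (k : ℕ) (hk1 : 1 ≤ k) (hkn : k ≤ n) :
    ENNReal.ofReal ((k : ℝ) / ((n : ℝ) + 1)) ≤
      P {ω | S ω (Fin.last n) ≤
        ((List.ofFn (fun i : Fin n => S ω i.castSucc)).insertionSort (· ≤ ·)).getD
          (k - 1) 0} := by
  obtain ⟨k, rfl⟩ := Nat.exists_eq_add_of_le' hk1
  exact stmt_12_general P hS.aemeasurable hexch hkn 0
end
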